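/- arXiv:1910.09500 — 2 statements merged into one kernel-verified Lean document; each statement's English description precedes it below -/
import Mathlib

section
/- Let λ : ℤ₊ → ℝ satisfy (UB) and let N ≥ 1. For all t ≥ 0, x ∈ W^{N+1} and (y',x') ∈ W^{N,N+1}: det( e^{tL}(x_i, x'_j) )_{i,j=1}^{N+1} · ∏_{i=1}^N λ(y'_i)^{−1} · 1(y' ≺ x') = Σ_{y ∈ ℤ₊^N : y ≺ x} ∏_{i=1}^N λ(y_i)^{−1} · U_t^{N,N+1}[(y,x),(y',x')]. (Equivalently, P_t^{N+1} Λ_N^{N+1} = Λ_N^{N+1} U_t^{N,N+1} as positive kernels from W^{N+1} to W^{N,N+1}.) -/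
open Complex MeasureTheory Finset
open scoped Real ComplexOrder

/-- ψ_x(w) = ∏_{k=0}^{x} λ(k)/(λ(k)−w). -/
noncomputable def psiF (lam : ℕ → ℝ) (x : ℕ) (w : ℂ) : ℂ :=
  ∏ k ∈ Finset.range (x + 1), (lam k : ℂ) / ((lam k : ℂ) - w)

/-- p_x(w) = ∏_{k=0}^{x−1} (λ(k)−w)/λ(k). -/
noncomputable def pF (lam : ℕ → ℝ) (x : ℕ) (w : ℂ) : ℂ :=
  ∏ k ∈ Finset.range x, (((lam k : ℂ) - w) / (lam k : ℂ))

/-- e^{tL}(x,y) := −(1/λ(y))·(1/(2πi)) ∮_{|w|=R} ψ_y(w) p_x(w) e^{−tw} dw,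
the contour being the counterclockwise circle of radius R centred at 0. -/
noncomputable def eL (lam : ℕ → ℝ) (R t : ℝ) (x y : ℕ) : ℂ :=
  -(1 / (lam y : ℂ)) * ((2 * (Real.pi : ℂ) * Complex.I)⁻¹ *
    ∮ w in C(0, R), psiF lam y w * pF lam x w * Complex.exp (-(t : ℂ) * w))

/-- y ≺ x : interlacing, x_1 ≤ y_1 < x_2 ≤ y_2 < ⋯ ≤ y_N < x_{N+1}.
(Membership of (y,x) in W^{N,N+1} is exactly this condition.) -/
def Interlace {N : ℕ} (y : Fin N → ℕ) (x : Fin (N + 1) → ℕ) : Prop :=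
  ∀ i : Fin N, x i.castSucc ≤ y i ∧ y i < x i.succ

instance {N : ℕ} (y : Fin N → ℕ) (x : Fin (N + 1) → ℕ) : Decidable (Interlace y x) :=
  inferInstanceAs (Decidable (∀ i : Fin N, x i.castSucc ≤ y i ∧ y i < x i.succ))

/-- The two-level Karlin–McGregor block determinant kernel
U_t^{N,N+1}[(y,x),(y',x')] = det [[A, B],[C, D]] with
A_{ij} = e^{tL}(x_i,x'_j), B_{ij} = λ(y'_j)⁻¹ (Σ_{z=0}^{y'_j} e^{tL}(x_i,z) − 1(j ≥ i)),
C_{ij} = λ(y_i)(e^{tL}(y_i,x'_j) − e^{tL}(y_i+1,x'_j)), D_{ij} = e^{tL}(y_i,y'_j). -/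
noncomputable def Ut (lam : ℕ → ℝ) (R t : ℝ) (N : ℕ)
    (y : Fin N → ℕ) (x : Fin (N + 1) → ℕ)
    (y' : Fin N → ℕ) (x' : Fin (N + 1) → ℕ) : ℂ :=
  (Matrix.fromBlocks
    (Matrix.of fun i j => eL lam R t (x i) (x' j))
    (Matrix.of fun (i : Fin (N + 1)) (j : Fin N) =>
      (1 / (lam (y' j) : ℂ)) *
        ((∑ z ∈ Finset.range (y' j + 1), eL lam R t (x i) z)
          - if (i : ℕ) ≤ (j : ℕ) then 1 else 0))
    (Matrix.of fun (i : Fin N) (j : Fin (N + 1)) =>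
      (lam (y i) : ℂ) * (eL lam R t (y i) (x' j) - eL lam R t (y i + 1) (x' j)))
    (Matrix.of fun i j => eL lam R t (y i) (y' j))).det

/-- The contour integral of `∏_{k<n} λ(k)/(λ(k)-w) · p_y(w) e^{-tw}`, for which
`e^{tL}(y, z)` is, up to a constant, the value at `n = z + 1`. -/
noncomputable def contourJ (lam : ℕ → ℝ) (R t : ℝ) (y n : ℕ) : ℂ :=
  ∮ w in C(0, R), (∏ k ∈ Finset.range n, (lam k : ℂ) / ((lam k : ℂ) - w)) * pF lam y w *
    Complex.exp (-(t : ℂ) * w)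

lemma eL_eq_contourJ (lam : ℕ → ℝ) (R t : ℝ) (y z : ℕ) :
    eL lam R t y z = -(1 / (lam z : ℂ)) *
      ((2 * (Real.pi : ℂ) * Complex.I)⁻¹ * contourJ lam R t y (z + 1)) := rfl

lemma differentiable_pF_mul_exp (lam : ℕ → ℝ) (t : ℝ) (y : ℕ) :
    Differentiable ℂ fun w => pF lam y w * Complex.exp (-(t : ℂ) * w) := by
  unfold pF
  fun_prop

lemma contourJ_zero (lam : ℕ → ℝ) {R : ℝ} (hR : 0 ≤ R) (t : ℝ) (y : ℕ) :
    contourJ lam R t y 0 = 0 := by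
  simp only [contourJ, Finset.range_zero, Finset.prod_empty, one_mul]
  have h := differentiable_pF_mul_exp lam t y
  exact circleIntegral_eq_zero_of_differentiable_on_off_countable hR Set.countable_empty
    h.continuous.continuousOn fun z _ => h z

lemma ofReal_sub_ne_zero_of_mem_sphere {a R : ℝ} (ha : 0 < a) (haR : a < R) {w : ℂ}
    (hw : w ∈ Metric.sphere (0 : ℂ) R) : (a : ℂ) - w ≠ 0 := by
  intro h
  rw [mem_sphere_zero_iff_norm, ← sub_eq_zero.mp h, Complex.norm_real, Real.norm_eq_abs,
    abs_of_pos ha] at hw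
  exact haR.ne hw

lemma circleIntegrable_contourJ {lam : ℕ → ℝ} {R : ℝ} (h0 : ∀ k, 0 < lam k)
    (hR : ∀ k, lam k < R) (t : ℝ) (y n : ℕ) :
    CircleIntegrable (fun w => (∏ k ∈ Finset.range n, (lam k : ℂ) / ((lam k : ℂ) - w)) *
      pF lam y w * Complex.exp (-(t : ℂ) * w)) 0 R := by
  refine ContinuousOn.circleIntegrable ((h0 0).trans (hR 0)).le ?_
  simp only [mul_assoc]
  refine ContinuousOn.mul (continuousOn_finsetProd _ fun k _ => ?_)
    (differentiable_pF_mul_exp lam t y).continuous.continuousOn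
  exact continuousOn_const.div (by fun_prop) fun w hw =>
    ofReal_sub_ne_zero_of_mem_sphere (h0 k) (hR k) hw

/-- The backward difference of `e^{tL}` in the first variable is a forward difference of
contour integrals in the second. -/
lemma eL_sub_eL_succ {lam : ℕ → ℝ} {R : ℝ} (h0 : ∀ k, 0 < lam k)
    (hR : ∀ k, lam k < R) (t : ℝ) (y z : ℕ) :
    eL lam R t y z - eL lam R t (y + 1) z =
      -(1 / (lam y : ℂ)) * ((2 * (Real.pi : ℂ) * Complex.I)⁻¹ *
        (contourJ lam R t y (z + 1) - contourJ lam R t y z)) := by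
  have hz : (lam z : ℂ) ≠ 0 := by exact_mod_cast (h0 z).ne'
  have hy : (lam y : ℂ) ≠ 0 := by exact_mod_cast (h0 y).ne'
  have key : contourJ lam R t y (z + 1) - contourJ lam R t (y + 1) (z + 1) =
      ((lam z : ℂ) / lam y) * (contourJ lam R t y (z + 1) - contourJ lam R t y z) := by
    unfold contourJ
    rw [← circleIntegral.integral_sub (circleIntegrable_contourJ h0 hR t _ _)
        (circleIntegrable_contourJ h0 hR t _ _),
      ← circleIntegral.integral_sub (circleIntegrable_contourJ h0 hR t _ _)
        (circleIntegrable_contourJ h0 hR t _ _), ← circleIntegral.integral_const_mul]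
    refine circleIntegral.integral_congr ((h0 0).trans (hR 0)).le fun w hw => ?_
    have hw' := ofReal_sub_ne_zero_of_mem_sphere (h0 z) (hR z) hw
    simp only [pF, Finset.prod_range_succ]
    field_simp
    ring
  calc _ = -(1 / (lam z : ℂ)) * ((2 * (Real.pi : ℂ) * Complex.I)⁻¹ *
        (contourJ lam R t y (z + 1) - contourJ lam R t (y + 1) (z + 1))) := by
        simp only [eL_eq_contourJ]; ring
    _ = _ := by rw [key]; field_simp

/-- The duality `λ(y)⁻¹ e^{tL}(y, n) = λ(n)⁻¹ Σ_{z ≤ n} (e^{tL}(y, z) - e^{tL}(y+1, z))`. -/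
lemma inv_mul_eL {lam : ℕ → ℝ} {R : ℝ} (h0 : ∀ k, 0 < lam k)
    (hR : ∀ k, lam k < R) (t : ℝ) (y n : ℕ) :
    (lam y : ℂ)⁻¹ * eL lam R t y n = 1 / (lam n : ℂ) *
      (∑ z ∈ Finset.range (n + 1), eL lam R t y z -
        ∑ z ∈ Finset.range (n + 1), eL lam R t (y + 1) z) := by
  rw [← Finset.sum_sub_distrib]
  simp only [eL_sub_eL_succ h0 hR, ← Finset.mul_sum]
  rw [Finset.sum_range_sub, contourJ_zero lam ((h0 0).trans (hR 0)).le, eL_eq_contourJ]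
  ring

/-- Multilinearity of a block determinant in the rows of the lower blocks. -/
lemma Matrix.sum_piFinset_prod_mul_det_fromBlocks {m n α K : Type*} [CommRing K]
    [Fintype m] [Fintype n] [DecidableEq m] [DecidableEq n]
    (A : Matrix m m K) (B : Matrix m n K) (s : n → Finset α) (c : α → K)
    (C : α → m → K) (D : α → n → K) :
    ∑ y ∈ Fintype.piFinset s, (∏ i, c (y i)) *
        (Matrix.fromBlocks A B (Matrix.of fun i => C (y i)) (Matrix.of fun i => D (y i))).det =
      (Matrix.fromBlocks A B
        (Matrix.of fun i j => ∑ a ∈ s i, c a * C a j)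
        (Matrix.of fun i j => ∑ a ∈ s i, c a * D a j)).det := by
  let f := ((Matrix.detRowAlternating (R := K) (n := m ⊕ n)).toMultilinearMap.currySum)
    fun i => Sum.elim (A i) (B i)
  have hf (P : Matrix n m K) (Q : Matrix n n K) :
      f (fun i => Sum.elim (P i) (Q i)) = (Matrix.fromBlocks A B P Q).det := by
    simp only [f, MultilinearMap.currySum_apply]
    change Matrix.det _ = _
    congr 1
  have h := f.map_sum_finset (fun _ a => c a • Sum.elim (C a) (D a)) s
  simp only [f.map_smul_univ] at h
  rw [← hf]
  convert h.symm using 2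
  · rw [smul_eq_mul, ← hf]; rfl
  · funext i
    ext (j | j) <;> simp

/-- If the lower blocks are `K` times the upper ones, up to a correction `E` in the corner,
the block determinant factors. -/
lemma Matrix.det_fromBlocks_mul_add {m n K : Type*} [CommRing K]
    [Fintype m] [Fintype n] [DecidableEq m] [DecidableEq n]
    (A : Matrix m m K) (B : Matrix m n K) (L : Matrix n m K) (E : Matrix n n K) :
    (Matrix.fromBlocks A B (L * A) (L * B + E)).det = A.det * E.det := by
  have h : Matrix.fromBlocks A B (L * A) (L * B + E) =
      Matrix.fromBlocks 1 0 L 1 * Matrix.fromBlocks A B 0 E := by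
    simp [Matrix.fromBlocks_multiply]
  rw [h, Matrix.det_mul, Matrix.det_fromBlocks_zero₁₂, Matrix.det_fromBlocks_zero₂₁]
  simp

/-- the intertwining P_t^{N+1} Λ_N^{N+1} = Λ_N^{N+1} U_t^{N,N+1}:
for all t ≥ 0, x ∈ W^{N+1} and (y',x') ∈ W^{N,N+1},
det(e^{tL}(x_i,x'_j)) ∏ λ(y'_i)⁻¹ 1(y'≺x') = Σ_{y ≺ x} ∏ λ(y_i)⁻¹ U_t^{N,N+1}[(y,x),(y',x')]. -/
theorem stmt_6 (lam : ℕ → ℝ) (s M : ℝ) (hs : 0 < s)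
    (hlb : ∀ x, s ≤ lam x) (hub : ∀ x, lam x ≤ M)
    (R : ℝ) (hR : M < R) (N : ℕ) (hN : 1 ≤ N) (t : ℝ) (ht : 0 ≤ t)
    (x : Fin (N + 1) → ℕ) (hx : StrictMono x)
    (y' : Fin N → ℕ) (x' : Fin (N + 1) → ℕ) (hy'x' : Interlace y' x') :
    HasSum (fun y : { y : Fin N → ℕ // Interlace y x } =>
        ((∏ i, (lam (y.1 i))⁻¹ : ℝ) : ℂ) * Ut lam R t N y.1 x y' x')
      ((Matrix.of fun i j => eL lam R t (x i) (x' j)).det *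
        ((∏ i, (lam (y' i))⁻¹ : ℝ) : ℂ) * (if Interlace y' x' then 1 else 0)) := by
  have h0 (k) : 0 < lam k := hs.trans_le (hlb k)
  have hlR (k) : lam k < R := (hub k).trans_lt hR
  have hne (k) : (lam k : ℂ) ≠ 0 := by exact_mod_cast (h0 k).ne'
  let S : Finset (Fin N → ℕ) :=
    Fintype.piFinset fun i => Finset.Ico (x i.castSucc) (x i.succ)
  have hS (y : Fin N → ℕ) : y ∈ S ↔ Interlace y x := by simp [S, Interlace]
  have hle (i : Fin N) : x i.castSucc ≤ x i.succ := (hx i.castSucc_lt_succ).le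
  suffices hval : ∑ y ∈ S, ((∏ i, (lam (y i))⁻¹ : ℝ) : ℂ) * Ut lam R t N y x y' x' =
      (Matrix.of fun i j => eL lam R t (x i) (x' j)).det *
        ((∏ i, (lam (y' i))⁻¹ : ℝ) : ℂ) * (if Interlace y' x' then 1 else 0) by
    rw [← hval]
    refine (Equiv.subtypeEquivRight hS).hasSum_iff.mp ?_
    exact S.hasSum fun y => ((∏ i, (lam (y i))⁻¹ : ℝ) : ℂ) * Ut lam R t N y x y' x'
  simp only [Complex.ofReal_prod, Complex.ofReal_inv, Ut]
  rw [if_pos hy'x', mul_one]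
  refine (Matrix.sum_piFinset_prod_mul_det_fromBlocks _ _ _ (fun a => (lam a : ℂ)⁻¹)
    (fun a j => (lam a : ℂ) * (eL lam R t a (x' j) - eL lam R t (a + 1) (x' j)))
    (fun a j => eL lam R t a (y' j))).trans ?_
  rw [← Matrix.det_diagonal (d := fun i => (lam (y' i) : ℂ)⁻¹)]
  have telescope (g : ℕ → ℂ) (i : Fin N) :
      ∑ a ∈ Finset.Ico (x i.castSucc) (x i.succ), (g a - g (a + 1)) =
        g (x i.castSucc) - g (x i.succ) := by
    rw [← neg_sub (g (x i.succ)), ← Finset.sum_Ico_sub g (hle i), ← Finset.sum_neg_distrib]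
    simp
  have diff_mul {k : ℕ} (P : Matrix (Fin (N + 1)) (Fin k) ℂ) (i : Fin N) (j : Fin k) :
      ((Matrix.of fun (i : Fin N) (l : Fin (N + 1)) =>
        (if i.castSucc = l then (1 : ℂ) else 0) - if i.succ = l then 1 else 0) * P) i j =
        P i.castSucc j - P i.succ j := by
    simp [Matrix.mul_apply, sub_mul, Finset.sum_sub_distrib]
  rw [← Matrix.det_fromBlocks_mul_add (L := Matrix.of fun (i : Fin N) (l : Fin (N + 1)) =>
        (if i.castSucc = l then (1 : ℂ) else 0) - if i.succ = l then 1 else 0)]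
  congr 2
  · ext i j
    rw [diff_mul]
    simp only [Matrix.of_apply, inv_mul_cancel_left₀ (hne _)]
    exact telescope (fun a => eL lam R t a (x' j)) i
  · ext i j
    rw [Matrix.add_apply, diff_mul]
    simp only [Matrix.of_apply, inv_mul_eL h0 hlR, ← Finset.mul_sum]
    rw [telescope (fun a => ∑ z ∈ Finset.range (y' j + 1), eL lam R t a z) i]
    simp only [Matrix.diagonal_apply, Fin.val_castSucc, Fin.val_succ, Fin.ext_iff]
    rcases lt_trichotomy (i : ℕ) j with h | h | h
    · simp [h.le, h.ne, Nat.succ_le_of_lt h]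
      ring
    · obtain rfl := Fin.ext h
      simp
      ring
    · simp [h.not_ge, h.ne', show ¬ (i : ℕ) + 1 ≤ j by omega]
      ring
end

section
/- Let λ : ℤ₊ → ℝ satisfy (UB) and let N ≥ 1. Fix (y',x') ∈ W^{N,N+1}. Then: (i) at t = 0, U_0^{N,N+1}[(y,x),(y',x')] = 1( (y,x) = (y',x') ) for all (y,x) ∈ W^{N,N+1}; (ii) for every (y,x) ∈ W^{N,N+1} belonging to the interior of W^{N,N+1} (meaning that (y + e_i, x) ∈ W^{N,N+1} for every 1 ≤ i ≤ N and (y, x + e_j) ∈ W^{N,N+1} for every 1 ≤ j ≤ N+1, where e_i denotes the i-th standard unit vector), the map t ↦ U_t^{N,N+1}[(y,x),(y',x')] is differentiable on [0,∞) and satisfies the Kolmogorov backward equation (d/dt) U_t^{N,N+1}[(y,x),(y',x')] = Σ_{j=1}^{N+1} λ(x_j) ( U_t^{N,N+1}[(y, x+e_j),(y',x')] − U_t^{N,N+1}[(y,x),(y',x')] ) + Σ_{i=1}^{N} λ(y_i) ( U_t^{N,N+1}[(y+e_i, x),(y',x')] − U_t^{N,N+1}[(y,x),(y',x')] ); and (iii)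 the Dirichlet boundary condition holds: if y ∈ ℤ₊^N has y_i = y_{i+1} for some i, then U_t^{N,N+1}[(y,x),(y',x')] = 0 for all t ≥ 0 and x ∈ ℤ₊^{N+1}. -/
open Complex MeasureTheory Finset
open scoped Real ComplexOrder

section Determinant

variable {n : Type*} [Fintype n] [DecidableEq n]

/-- The derivative of a determinant, expanded along the rows. -/
theorem hasDerivAt_det {A : ℝ → Matrix n n ℂ} {A' : Matrix n n ℂ} {t : ℝ}
    (h : ∀ i j, HasDerivAt (fun τ => A τ i j) (A' i j) t) :
    HasDerivAt (fun τ => (A τ).det) (∑ i, ((A t).updateRow i (A' i)).det) t := by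
  have key : HasDerivAt (fun τ => ∑ σ : Equiv.Perm n,
      ((Equiv.Perm.sign σ : ℤ) : ℂ) * ∏ i, A τ i (σ i))
      (∑ σ : Equiv.Perm n, ((Equiv.Perm.sign σ : ℤ) : ℂ) *
        ∑ i, (∏ j ∈ Finset.univ.erase i, A t j (σ j)) • A' i (σ i)) t :=
    HasDerivAt.fun_sum fun σ _ =>
      (HasDerivAt.fun_finsetProd fun i _ => h i (σ i)).const_mul _
  have expand : ∀ B : Matrix n n ℂ, B.det = ∑ σ : Equiv.Perm n,
      ((Equiv.Perm.sign σ : ℤ) : ℂ) * ∏ i, B i (σ i) := fun B => by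
    rw [← Matrix.det_transpose, Matrix.det_apply']
    rfl
  have hdet : (fun τ => (A τ).det) = fun τ => ∑ σ : Equiv.Perm n,
      ((Equiv.Perm.sign σ : ℤ) : ℂ) * ∏ i, A τ i (σ i) := funext fun τ => expand _
  rw [hdet]
  convert key using 1
  simp_rw [expand, Finset.mul_sum]
  rw [Finset.sum_comm]
  refine Finset.sum_congr rfl fun σ _ => Finset.sum_congr rfl fun i _ => ?_
  congr 1
  rw [← Finset.mul_prod_erase _ _ (Finset.mem_univ i), Matrix.updateRow_self, smul_eq_mul, mul_comm]
  congr 1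
  refine Finset.prod_congr rfl fun j hj => ?_
  rw [Matrix.updateRow_ne (Finset.ne_of_mem_erase hj)]

/-- If only the identity permutation can contribute, the determinant is the product of the
diagonal entries. -/
theorem det_eq_prod_diag {A : Matrix n n ℂ}
    (h : ∀ σ : Equiv.Perm n, (∀ i, A (σ i) i ≠ 0) → σ = 1) : A.det = ∏ i, A i i := by
  rw [Matrix.det_apply', Finset.sum_eq_single 1]
  · simp
  · intro σ _ hσ
    by_contra hne
    refine hσ (h σ fun i hi => hne ?_)
    exact mul_eq_zero_of_right _ (Finset.prod_eq_zero (Finset.mem_univ i) hi)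
  · simp

end Determinant

section Semigroup

variable {lam : ℕ → ℝ} {s M R : ℝ}

theorem rate_sub_ne_zero (hs : 0 < s) (hlb : ∀ x, s ≤ lam x) (hub : ∀ x, lam x ≤ M)
    {w : ℂ} (hw : M < ‖w‖) (k : ℕ) : (lam k : ℂ) - w ≠ 0 := by
  intro h
  rw [← sub_eq_zero.1 h, Complex.norm_real, Real.norm_eq_abs,
    abs_of_pos (hs.trans_le (hlb k))] at hw
  exact absurd hw (not_lt.2 (hub k))

theorem rate_ne_zero (hs : 0 < s) (hlb : ∀ x, s ≤ lam x) (k : ℕ) : (lam k : ℂ) ≠ 0 :=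
  Complex.ofReal_ne_zero.2 (hs.trans_le (hlb k)).ne'

theorem differentiable_pF (x : ℕ) : Differentiable ℂ (pF lam x) := by
  unfold pF
  fun_prop

theorem differentiableAt_psiF (hs : 0 < s) (hlb : ∀ x, s ≤ lam x) (hub : ∀ x, lam x ≤ M)
    {w : ℂ} (hw : M < ‖w‖) (y : ℕ) : DifferentiableAt ℂ (psiF lam y) w := by
  unfold psiF
  refine DifferentiableAt.fun_finsetProd fun k _ => ?_
  exact (differentiableAt_const _).div ((differentiableAt_const _).sub differentiableAt_id)
    (rate_sub_ne_zero hs hlb hub hw k)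

theorem hasDerivAt_circleIntegral_mul_exp (hR : 0 ≤ R) {g : ℂ → ℂ}
    (hg : ContinuousOn g (Metric.sphere 0 R)) (t : ℝ) :
    HasDerivAt (fun τ : ℝ => ∮ w in C(0, R), g w * Complex.exp (-(τ : ℂ) * w))
      (∮ w in C(0, R), g w * (-w) * Complex.exp (-(t : ℂ) * w)) t := by
  have hgc : Continuous fun θ : ℝ => g (circleMap 0 R θ) :=
    hg.comp_continuous (continuous_circleMap _ _) (circleMap_mem_sphere _ hR)
  have hc : Continuous fun θ : ℝ => circleMap 0 R θ := continuous_circleMap _ _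
  unfold circleIntegral
  simp only [deriv_circleMap, smul_eq_mul]
  generalize hG : (fun θ : ℝ => g (circleMap 0 R θ)) = G at hgc
  replace hG : ∀ θ, g (circleMap 0 R θ) = G θ := congrFun hG
  simp only [hG]
  refine (intervalIntegral.hasDerivAt_integral_of_dominated_loc_of_deriv_le
    (F := fun (τ : ℝ) θ => circleMap 0 R θ * I *
      (G θ * Complex.exp (-(τ : ℂ) * circleMap 0 R θ)))
    (F' := fun (τ : ℝ) θ => circleMap 0 R θ * I *
      (G θ * (-circleMap 0 R θ) * Complex.exp (-(τ : ℂ) * circleMap 0 R θ)))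
    (bound := fun θ => R * (‖G θ‖ * R * Real.exp ((|t| + 1) * R)))
    (Metric.ball_mem_nhds t one_pos) ?_ ?_ ?_ ?_ ?_ ?_).2
  · exact Filter.Eventually.of_forall fun τ => (by fun_prop : Continuous _).aestronglyMeasurable
  · exact (by fun_prop : Continuous _).intervalIntegrable _ _
  · exact (by fun_prop : Continuous _).aestronglyMeasurable
  · refine Filter.Eventually.of_forall fun θ _ τ hτ => ?_
    have hn : ‖circleMap 0 R θ‖ = R := by simp [abs_of_nonneg hR]
    have hτ' : |τ| ≤ |t| + 1 := by
      have h1 : |τ - t| < 1 := by simpa [Real.dist_eq] using hτ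
      have h2 := abs_add_le (τ - t) t
      rw [sub_add_cancel] at h2
      linarith
    simp only [norm_mul, norm_neg, hn, Complex.norm_I, mul_one]
    gcongr
    refine (Complex.norm_exp_le_exp_norm _).trans (Real.exp_le_exp.2 ?_)
    rw [norm_mul, norm_neg, hn, Complex.norm_real, Real.norm_eq_abs]
    gcongr
  · exact (by fun_prop : Continuous _).intervalIntegrable _ _
  · refine Filter.Eventually.of_forall fun θ _ τ _ => ?_
    have h1 : HasDerivAt (fun τ : ℝ => -(τ : ℂ) * circleMap 0 R θ) (-1 * circleMap 0 R θ) τ :=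
      (Complex.ofRealCLM.hasDerivAt.neg).mul_const _
    refine (((h1.cexp).const_mul (G θ)).const_mul (circleMap 0 R θ * I)).congr_deriv ?_
    ring

/-- The backward equation of the one-particle semigroup. -/
theorem hasDerivAt_eL (hs : 0 < s) (hlb : ∀ x, s ≤ lam x) (hub : ∀ x, lam x ≤ M)
    (hR : M < R) (t : ℝ) (x y : ℕ) :
    HasDerivAt (fun τ => eL lam R τ x y)
      ((lam x : ℂ) * (eL lam R t (x + 1) y - eL lam R t x y)) t := by
  have hR0 : 0 ≤ R := ((hs.trans_le (hlb 0)).trans_le (hub 0)).le.trans hR.le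
  have hcont : ∀ x, ContinuousOn (fun w => psiF lam y w * pF lam x w) (Metric.sphere 0 R) := by
    intro x w hw
    have hw' : M < ‖w‖ := by rwa [mem_sphere_zero_iff_norm.1 hw]
    exact ((differentiableAt_psiF hs hlb hub hw' y).mul
      (differentiable_pF x w)).continuousAt.continuousWithinAt
  have hint : ∀ x, CircleIntegrable
      (fun w => psiF lam y w * pF lam x w * Complex.exp (-(t : ℂ) * w)) 0 R := fun x =>
    ((hcont x).mul (by fun_prop : Continuous _).continuousOn).circleIntegrable hR0
  have key := ((hasDerivAt_circleIntegral_mul_exp hR0 (hcont x) t).const_mul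
    ((2 * (Real.pi : ℂ) * Complex.I)⁻¹)).const_mul (-(1 / (lam y : ℂ)))
  refine HasDerivAt.congr_deriv key (Eq.symm ?_)
  unfold eL
  rw [← mul_sub, ← mul_sub, ← circleIntegral.integral_sub (hint _) (hint _), mul_left_comm,
    mul_left_comm (lam x : ℂ), ← circleIntegral.integral_const_mul]
  congr 3
  funext w
  have hx := rate_ne_zero hs hlb x
  have : pF lam (x + 1) w = pF lam x w * (((lam x : ℂ) - w) / (lam x : ℂ)) :=
    Finset.prod_range_succ _ _
  rw [this]
  field_simp
  ring

/-- A product of at least two resolvent factors has vanishing contour integral. -/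
theorem circleIntegral_prod_resolvent_eq_zero (hs : 0 < s) (hlb : ∀ x, s ≤ lam x)
    (hub : ∀ x, lam x ≤ M) (hR : M < R) {S : Finset ℕ} (hS : 2 ≤ S.card) :
    (∮ w in C(0, R), ∏ k ∈ S, (lam k : ℂ) / ((lam k : ℂ) - w)) = 0 := by
  have hM : 0 < M := (hs.trans_le (hlb 0)).trans_le (hub 0)
  have hd : ∀ w : ℂ, M < ‖w‖ →
      DifferentiableAt ℂ (fun w => ∏ k ∈ S, (lam k : ℂ) / ((lam k : ℂ) - w)) w := fun w hw =>
    DifferentiableAt.fun_finsetProd fun k _ => (differentiableAt_const _).div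
      ((differentiableAt_const _).sub differentiableAt_id) (rate_sub_ne_zero hs hlb hub hw k)
  have hdeform : ∀ r, R ≤ r →
      (∮ w in C(0, r), ∏ k ∈ S, (lam k : ℂ) / ((lam k : ℂ) - w)) =
        ∮ w in C(0, R), ∏ k ∈ S, (lam k : ℂ) / ((lam k : ℂ) - w) := by
    intro r hr
    refine Complex.circleIntegral_eq_of_differentiable_on_annulus_off_countable (hM.trans hR) hr
      Set.countable_empty (fun w hw => (hd w ?_).continuousAt.continuousWithinAt)
      (fun w hw => hd w ?_)
    · have : R ≤ ‖w‖ := by simpa using hw.2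
      linarith
    · have : R < ‖w‖ := by simpa using hw.1.2
      linarith
  have hbound : ∀ᶠ r : ℝ in Filter.atTop,
      ‖∮ w in C(0, R), ∏ k ∈ S, (lam k : ℂ) / ((lam k : ℂ) - w)‖ ≤
        (2 * π * (2 * M) ^ 2) / r := by
    filter_upwards [Filter.eventually_ge_atTop R, Filter.eventually_ge_atTop (2 * M)] with r h1 h2
    have hr : 0 < r := by linarith
    rw [← hdeform r h1]
    refine (circleIntegral.norm_integral_le_of_norm_le_const hr.le
      (C := (2 * M / r) ^ 2) fun w hw => ?_).trans_eq (by field_simp)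
    rw [norm_prod]
    have hw' : ‖w‖ = r := mem_sphere_zero_iff_norm.1 hw
    have hfac : ∀ k, ‖(lam k : ℂ) / ((lam k : ℂ) - w)‖ ≤ 2 * M / r := by
      intro k
      have hk : ‖(lam k : ℂ)‖ ≤ M := by
        rw [Complex.norm_real, Real.norm_eq_abs, abs_of_pos (hs.trans_le (hlb k))]
        exact hub k
      have hden : r / 2 ≤ ‖(lam k : ℂ) - w‖ := by
        have := norm_sub_norm_le w (lam k : ℂ)
        rw [norm_sub_rev] at this
        linarith
      rw [norm_div]
      calc ‖(lam k : ℂ)‖ / ‖(lam k : ℂ) - w‖ ≤ M / (r / 2) := by gcongr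
        _ = 2 * M / r := by field_simp
    calc ∏ k ∈ S, ‖(lam k : ℂ) / ((lam k : ℂ) - w)‖ ≤ ∏ _k ∈ S, (2 * M / r) :=
          Finset.prod_le_prod (fun _ _ => norm_nonneg _) fun k _ => hfac k
      _ = (2 * M / r) ^ S.card := Finset.prod_const _
      _ ≤ (2 * M / r) ^ 2 :=
          pow_le_pow_of_le_one (by positivity) ((div_le_one hr).2 h2) hS
  have hlim : Filter.Tendsto (fun r : ℝ => (2 * π * (2 * M) ^ 2) / r) Filter.atTop (nhds 0) :=
    Filter.Tendsto.const_div_atTop Filter.tendsto_id _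
  exact norm_le_zero_iff.1 (ge_of_tendsto hlim hbound)

theorem eL_zero (hs : 0 < s) (hlb : ∀ x, s ≤ lam x) (hub : ∀ x, lam x ≤ M)
    (hR : M < R) (x y : ℕ) : eL lam R 0 x y = if x = y then 1 else 0 := by
  have hM : 0 < M := (hs.trans_le (hlb 0)).trans_le (hub 0)
  have hcancel : ∀ m (w : ℂ), M < ‖w‖ →
      (∏ k ∈ Finset.range m, (lam k : ℂ) / ((lam k : ℂ) - w)) * pF lam m w = 1 := by
    intro m w hw
    rw [pF, ← Finset.prod_mul_distrib]
    refine Finset.prod_eq_one fun k _ => ?_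
    have h1 := rate_ne_zero hs hlb k
    have h2 := rate_sub_ne_zero hs hlb hub hw k
    field_simp
  have hnorm : ∀ w ∈ Metric.sphere (0 : ℂ) R, M < ‖w‖ := fun w hw => by
    rwa [mem_sphere_zero_iff_norm.1 hw]
  unfold eL
  rcases lt_or_ge y x with h | h
  · rw [if_neg h.ne']
    have : (∮ w in C(0, R), psiF lam y w * pF lam x w * Complex.exp (-((0 : ℝ) : ℂ) * w)) =
        ∮ w in C(0, R), ∏ k ∈ Finset.Ico (y + 1) x, (((lam k : ℂ) - w) / (lam k : ℂ)) := by
      refine circleIntegral.integral_congr (hM.le.trans hR.le) fun w hw => ?_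
      have := hcancel (y + 1) w (hnorm w hw)
      simp only [pF, psiF] at this ⊢
      rw [← Finset.prod_range_mul_prod_Ico _ (Nat.succ_le_of_lt h), ← mul_assoc, this]
      simp
    rw [this, Complex.circleIntegral_eq_zero_of_differentiable_on_off_countable
      (hM.le.trans hR.le) Set.countable_empty]
    · simp
    · exact (by fun_prop : Continuous _).continuousOn
    · intro z _
      fun_prop
  · have : (∮ w in C(0, R), psiF lam y w * pF lam x w * Complex.exp (-((0 : ℝ) : ℂ) * w)) =
        ∮ w in C(0, R), ∏ k ∈ Finset.Ico x (y + 1), ((lam k : ℂ) / ((lam k : ℂ) - w)) := by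
      refine circleIntegral.integral_congr (hM.le.trans hR.le) fun w hw => ?_
      have := hcancel x w (hnorm w hw)
      simp only [psiF]
      rw [← Finset.prod_range_mul_prod_Ico _ (h.trans (Nat.le_succ y)), mul_right_comm _ _ (pF _ _ _),
        this]
      simp
    rw [this]
    rcases h.eq_or_lt with rfl | h
    · have hball : (lam x : ℂ) ∈ Metric.ball (0 : ℂ) R := by
        rw [mem_ball_zero_iff, Complex.norm_real, Real.norm_eq_abs,
          abs_of_pos (hs.trans_le (hlb x))]
        exact (hub x).trans_lt hR
      have hx := rate_ne_zero hs hlb x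
      have hfun : ∀ w : ℂ, (lam x : ℂ) / ((lam x : ℂ) - w) = -(lam x : ℂ) * (w - lam x)⁻¹ := by
        intro w
        rw [← neg_sub w, div_neg, div_eq_mul_inv, neg_mul]
      simp only [Nat.Ico_succ_singleton, Finset.prod_singleton, hfun,
        circleIntegral.integral_const_mul, circleIntegral.integral_sub_inv_of_mem_ball hball]
      have hpi : (Real.pi : ℂ) ≠ 0 := Complex.ofReal_ne_zero.2 Real.pi_ne_zero
      have hI := Complex.I_ne_zero
      rw [if_pos trivial]
      field_simp
    · rw [if_neg h.ne, circleIntegral_prod_resolvent_eq_zero hs hlb hub hR]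
      · simp
      · rw [Nat.card_Ico]
        omega

end Semigroup

section TwoLevel

variable {lam : ℕ → ℝ} {s M R : ℝ} {N : ℕ}

/-- The row of the two-level block matrix with label `r`, as a function of the position of the
particle attached to it. -/
noncomputable def levelRow (lam : ℕ → ℝ) (R t : ℝ) (y' : Fin N → ℕ) (x' : Fin (N + 1) → ℕ) :
    Fin (N + 1) ⊕ Fin N → ℕ → Fin (N + 1) ⊕ Fin N → ℂ
  | Sum.inl _, v, Sum.inl j => eL lam R t v (x' j)
  | Sum.inl i, v, Sum.inr j => (1 / (lam (y' j) : ℂ)) *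
      ((∑ z ∈ Finset.range (y' j + 1), eL lam R t v z) - if (i : ℕ) ≤ (j : ℕ) then 1 else 0)
  | Sum.inr _, v, Sum.inl j => (lam v : ℂ) * (eL lam R t v (x' j) - eL lam R t (v + 1) (x' j))
  | Sum.inr _, v, Sum.inr j => eL lam R t v (y' j)

theorem Ut_eq_det_levelRow (t : ℝ) (y : Fin N → ℕ) (x : Fin (N + 1) → ℕ) (y' : Fin N → ℕ)
    (x' : Fin (N + 1) → ℕ) : Ut lam R t N y x y' x' =
      (Matrix.of fun r => levelRow lam R t y' x' r (Sum.elim x y r)).det := by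
  unfold Ut
  congr 1
  ext (i | i) (j | j) <;> rfl

theorem hasDerivAt_levelRow (hs : 0 < s) (hlb : ∀ x, s ≤ lam x) (hub : ∀ x, lam x ≤ M)
    (hR : M < R) (t : ℝ) (y' : Fin N → ℕ) (x' : Fin (N + 1) → ℕ) (r : Fin (N + 1) ⊕ Fin N)
    (v : ℕ) (c : Fin (N + 1) ⊕ Fin N) :
    HasDerivAt (fun τ => levelRow lam R τ y' x' r v c)
      (((lam v : ℂ) • (levelRow lam R t y' x' r (v + 1) - levelRow lam R t y' x' r v)) c) t := by
  have hE := hasDerivAt_eL hs hlb hub hR t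
  rcases r with i | i <;> rcases c with j | j <;>
    simp only [levelRow, Pi.smul_apply, Pi.sub_apply, smul_eq_mul]
  · exact hE v (x' j)
  · refine (((HasDerivAt.fun_sum fun z (_ : z ∈ Finset.range (y' j + 1)) =>
      hE v z).sub_const (if (i : ℕ) ≤ (j : ℕ) then (1 : ℂ) else 0)).const_mul
        (1 / (lam (y' j) : ℂ))).congr_deriv ?_
    rw [← Finset.mul_sum, Finset.sum_sub_distrib]
    ring
  · refine (((hE v (x' j)).sub (hE (v + 1) (x' j))).const_mul (lam v : ℂ)).congr_deriv ?_
    ring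
  · exact hE v (y' j)

theorem hasDerivAt_Ut (hs : 0 < s) (hlb : ∀ x, s ≤ lam x) (hub : ∀ x, lam x ≤ M)
    (hR : M < R) (t : ℝ) (y : Fin N → ℕ) (x : Fin (N + 1) → ℕ) (y' : Fin N → ℕ)
    (x' : Fin (N + 1) → ℕ) :
    HasDerivAt (fun τ : ℝ => Ut lam R τ N y x y' x')
      ((∑ j : Fin (N + 1), (lam (x j) : ℂ) *
          (Ut lam R t N y (Function.update x j (x j + 1)) y' x' - Ut lam R t N y x y' x')) +
       (∑ i : Fin N, (lam (y i) : ℂ) *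
          (Ut lam R t N (Function.update y i (y i + 1)) x y' x' - Ut lam R t N y x y' x'))) t := by
  simp only [Ut_eq_det_levelRow]
  set v : Fin (N + 1) ⊕ Fin N → ℕ := Sum.elim x y with hv
  set L := levelRow lam R t y' x' with hL
  have hstep : ∀ r, ((Matrix.of fun r => L r (v r)).updateRow r
      ((lam (v r) : ℂ) • (L r (v r + 1) - L r (v r)))).det = (lam (v r) : ℂ) *
        ((Matrix.of fun q => L q (Function.update v r (v r + 1) q)).det -
          (Matrix.of fun q => L q (v q)).det) := by
    intro r
    have hup : (Matrix.of fun q => L q (Function.update v r (v r + 1) q)) =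
        (Matrix.of fun q => L q (v q)).updateRow r (L r (v r + 1)) := by
      ext q c
      by_cases hq : q = r
      · subst hq
        simp
      · simp [hq]
    have hself : (Matrix.of fun q => L q (v q)).updateRow r (L r (v r)) =
        Matrix.of fun q => L q (v q) := Matrix.updateRow_eq_self _ r
    rw [Matrix.det_updateRow_smul, sub_eq_add_neg, Matrix.det_updateRow_add, ← neg_one_smul ℂ,
      Matrix.det_updateRow_smul, hup, hself]
    ring
  have key := hasDerivAt_det (A := fun τ => Matrix.of fun r => levelRow lam R τ y' x' r (v r))
    (A' := Matrix.of fun r => (lam (v r) : ℂ) • (L r (v r + 1) - L r (v r)))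
    (fun r c => hasDerivAt_levelRow hs hlb hub hR t y' x' r (v r) c)
  refine key.congr_deriv ((Finset.sum_congr rfl fun r _ => hstep r).trans ?_)
  rw [Fintype.sum_sum_type]
  simp only [hv, Sum.elim_inl, Sum.elim_inr, Sum.update_elim_inl, Sum.update_elim_inr]

theorem Interlace.strictMono {y : Fin N → ℕ} {x : Fin (N + 1) → ℕ} (h : Interlace y x) :
    StrictMono x :=
  Fin.strictMono_iff_lt_succ.2 fun i => (h i).1.trans_lt (h i).2

theorem Interlace.strictMono_left {y : Fin N → ℕ} {x : Fin (N + 1) → ℕ} (h : Interlace y x) :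
    StrictMono y := fun i j hij =>
  (h i).2.trans_le ((h.strictMono.monotone (Fin.le_def.2 (by simpa using hij))).trans (h j).1)

theorem Interlace.le_iff {y : Fin N → ℕ} {x : Fin (N + 1) → ℕ} (h : Interlace y x)
    (i : Fin (N + 1)) (j : Fin N) : x i ≤ y j ↔ (i : ℕ) ≤ (j : ℕ) := by
  constructor
  · intro hij
    by_contra! hlt
    have h1 : x j.succ ≤ x i := h.strictMono.monotone (Fin.le_def.2 (by simpa using hlt))
    have h2 := (h j).2
    omega
  · intro hij
    have h1 : x i ≤ x j.castSucc := h.strictMono.monotone (Fin.le_def.2 (by simpa using hij))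
    exact h1.trans (h j).1

/-- The position of a label in the interlaced order `x₁, y₁, x₂, y₂, …`. -/
def interlacedRank : Fin (N + 1) ⊕ Fin N → ℕ
  | Sum.inl i => 2 * (i : ℕ)
  | Sum.inr i => 2 * (i : ℕ) + 1

theorem levelRow_zero_bounds (hs : 0 < s) (hlb : ∀ x, s ≤ lam x) (hub : ∀ x, lam x ≤ M)
    (hR : M < R) {y y' : Fin N → ℕ} {x x' : Fin (N + 1) → ℕ} (h : Interlace y x)
    (h' : Interlace y' x') {r c : Fin (N + 1) ⊕ Fin N}
    (hne : levelRow lam R 0 y' x' r (Sum.elim x y r) c ≠ 0) :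
    (interlacedRank r ≤ interlacedRank c → Sum.elim x' y' r ≤ Sum.elim x y r) ∧
    (interlacedRank c ≤ interlacedRank r → Sum.elim x y c ≤ Sum.elim x' y' c) := by
  have hE := eL_zero hs hlb hub hR
  rcases r with i | i <;> rcases c with j | j <;>
    simp only [levelRow, interlacedRank, Sum.elim_inl, Sum.elim_inr, hE] at hne ⊢
  · have heq : x i = x' j := by
      by_contra hc
      simp [hc] at hne
    exact ⟨fun hij => heq ▸ h'.strictMono.monotone (Fin.le_def.2 (by omega)),
      fun hij => heq ▸ h.strictMono.monotone (Fin.le_def.2 (by omega))⟩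
  · have hB : ¬ (x i ≤ y' j ↔ (i : ℕ) ≤ (j : ℕ)) := by
      intro hc
      simp [hc] at hne
    have h1 := h'.le_iff i j
    have h2 := h.le_iff i j
    constructor <;> intro hij
    · have : (i : ℕ) ≤ j := by omega
      simp only [this, iff_true] at hB h1
      omega
    · have : ¬ (i : ℕ) ≤ j := by omega
      simp only [this, iff_false, not_not] at hB h2
      omega
  · have heq : y i = x' j ∨ y i + 1 = x' j := by
      by_contra! hc
      simp [hc] at hne
    have h1 := h'.le_iff j i
    have h2 := h.le_iff j i
    constructor <;> intro hij
    · have : ¬ (j : ℕ) ≤ i := by omega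
      simp only [this, iff_false] at h1
      omega
    · have : (j : ℕ) ≤ i := by omega
      simp only [this, iff_true] at h2
      omega
  · have heq : y i = y' j := by
      by_contra hc
      simp [hc] at hne
    exact ⟨fun hij => heq ▸ h'.strictMono_left.monotone (Fin.le_def.2 (by omega)),
      fun hij => heq ▸ h.strictMono_left.monotone (Fin.le_def.2 (by omega))⟩

theorem levelRow_zero_row_eq (hs : 0 < s) (hlb : ∀ x, s ≤ lam x) (hub : ∀ x, lam x ≤ M)
    (hR : M < R) {y' : Fin N → ℕ} {x' : Fin (N + 1) → ℕ}
    (h' : Interlace y' x') {i : Fin (N + 1)} {c : Fin (N + 1) ⊕ Fin N}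
    (hne : levelRow lam R 0 y' x' (Sum.inl i) (x' i) c ≠ 0) : c = Sum.inl i := by
  have hE := eL_zero hs hlb hub hR
  rcases c with j | j <;> simp only [levelRow, hE] at hne
  · congr 1
    by_contra hc
    simp [h'.strictMono.injective.eq_iff, Ne.symm hc] at hne
  · simp [h'.le_iff] at hne

theorem levelRow_zero_col_eq (hs : 0 < s) (hlb : ∀ x, s ≤ lam x) (hub : ∀ x, lam x ≤ M)
    (hR : M < R) {y y' : Fin N → ℕ} {x x' : Fin (N + 1) → ℕ} (h : Interlace y x)
    {j : Fin N} (hj : y j = y' j) {r : Fin (N + 1) ⊕ Fin N}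
    (hr : interlacedRank (Sum.inr j : Fin (N + 1) ⊕ Fin N) ≤ interlacedRank r)
    (hne : levelRow lam R 0 y' x' r (Sum.elim x y r) (Sum.inr j) ≠ 0) : r = Sum.inr j := by
  have hE := eL_zero hs hlb hub hR
  rcases r with i | i <;>
    simp only [levelRow, hE, Sum.elim_inl, Sum.elim_inr, interlacedRank] at hne hr
  · simp [← hj, h.le_iff] at hne
  · congr 1
    by_contra hc
    simp [← hj, h.strictMono_left.injective.eq_iff, hc] at hne

theorem interlacedRank_injective :
    Function.Injective (interlacedRank : Fin (N + 1) ⊕ Fin N → ℕ) := by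
  rintro (i | i) (j | j) hij <;> simp only [interlacedRank] at hij
  · exact congrArg _ (Fin.ext (by omega))
  · omega
  · omega
  · exact congrArg _ (Fin.ext (by omega))

theorem eq_of_perm_levelRow_zero_ne_zero (hs : 0 < s) (hlb : ∀ x, s ≤ lam x)
    (hub : ∀ x, lam x ≤ M) (hR : M < R) {y y' : Fin N → ℕ} {x x' : Fin (N + 1) → ℕ}
    (h : Interlace y x) (h' : Interlace y' x') (σ : Equiv.Perm (Fin (N + 1) ⊕ Fin N))
    (hσ : ∀ c, levelRow lam R 0 y' x' (σ c) (Sum.elim x y (σ c)) c ≠ 0) (n : ℕ) :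
    ∀ c, interlacedRank c = n → σ c = c ∧ Sum.elim x y c = Sum.elim x' y' c := by
  induction n using Nat.strong_induction_on with
  | _ n ih =>
    intro c hc
    have hrow : interlacedRank c ≤ interlacedRank (σ.symm c) := by
      by_contra! hlt
      have := (ih _ (hc ▸ hlt) (σ.symm c) rfl).1
      rw [Equiv.apply_symm_apply] at this
      rw [← this] at hlt
      exact lt_irrefl _ hlt
    have hcol : interlacedRank c ≤ interlacedRank (σ c) := by
      by_contra! hlt
      have := (ih _ (hc ▸ hlt) (σ c) rfl).1
      rw [σ.injective this] at hlt
      exact lt_irrefl _ hlt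
    have hne : levelRow lam R 0 y' x' c (Sum.elim x y c) (σ.symm c) ≠ 0 := by
      simpa using hσ (σ.symm c)
    have heq : Sum.elim x y c = Sum.elim x' y' c :=
      le_antisymm ((levelRow_zero_bounds hs hlb hub hR h h' (hσ c)).2 hcol)
        ((levelRow_zero_bounds hs hlb hub hR h h' hne).1 hrow)
    refine ⟨?_, heq⟩
    rcases c with i | j
    · rw [heq] at hne
      exact ((Equiv.symm_apply_eq σ).1 (levelRow_zero_row_eq hs hlb hub hR h' hne)).symm
    · exact levelRow_zero_col_eq hs hlb hub hR h heq hcol (hσ _)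

theorem Ut_zero (hs : 0 < s) (hlb : ∀ x, s ≤ lam x) (hub : ∀ x, lam x ≤ M)
    (hR : M < R) {y y' : Fin N → ℕ} {x x' : Fin (N + 1) → ℕ} (h : Interlace y x)
    (h' : Interlace y' x') :
    Ut lam R 0 N y x y' x' = if y = y' ∧ x = x' then 1 else 0 := by
  have hperm := eq_of_perm_levelRow_zero_ne_zero hs hlb hub hR h h'
  rw [Ut_eq_det_levelRow, det_eq_prod_diag fun σ hσ =>
    Equiv.ext fun c => (hperm σ hσ _ c rfl).1]
  simp only [Matrix.of_apply]
  split_ifs with hyx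
  · obtain ⟨rfl, rfl⟩ := hyx
    refine Finset.prod_eq_one fun c _ => ?_
    rcases c with i | i <;> simp [levelRow, eL_zero hs hlb hub hR]
  · by_contra hprod
    rw [← ne_eq, Finset.prod_ne_zero_iff] at hprod
    have hv := fun c => (hperm 1 (fun c => hprod c (Finset.mem_univ c)) _ c rfl).2
    exact hyx ⟨funext fun i => hv (Sum.inr i), funext fun i => hv (Sum.inl i)⟩

theorem Ut_eq_zero_of_eq (t : ℝ) {y : Fin N → ℕ} (x : Fin (N + 1) → ℕ) (y' : Fin N → ℕ)
    (x' : Fin (N + 1) → ℕ) {i j : Fin N} (hij : i ≠ j) (hy : y i = y j) :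
    Ut lam R t N y x y' x' = 0 := by
  rw [Ut_eq_det_levelRow]
  refine Matrix.det_zero_of_row_eq (Sum.inr_injective.ne hij) ?_
  ext (k | k) <;> simp [levelRow, hy]

end TwoLevel

/-- fix (y',x') ∈ W^{N,N+1}. Then (i) U_0 = δ_{(y',x')};
(ii) for (y,x) in the interior of W^{N,N+1}, t ↦ U_t[(y,x),(y',x')] is differentiable
on [0,∞) and satisfies the Kolmogorov backward equation; (iii) U_t vanishes when two
y-coordinates coincide. -/
theorem stmt_7 (lam : ℕ → ℝ) (s M : ℝ) (hs : 0 < s)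
    (hlb : ∀ x, s ≤ lam x) (hub : ∀ x, lam x ≤ M)
    (R : ℝ) (hR : M < R) (N : ℕ) (hN : 1 ≤ N)
    (y' : Fin N → ℕ) (x' : Fin (N + 1) → ℕ) (hy'x' : Interlace y' x') :
    (∀ (y : Fin N → ℕ) (x : Fin (N + 1) → ℕ), Interlace y x →
        Ut lam R 0 N y x y' x' = if y = y' ∧ x = x' then 1 else 0) ∧
    (∀ (y : Fin N → ℕ) (x : Fin (N + 1) → ℕ), Interlace y x →
        (∀ i : Fin N, Interlace (Function.update y i (y i + 1)) x) →
        (∀ j : Fin (N + 1), Interlace y (Function.update x j (x j + 1))) →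
        ∀ t : ℝ, 0 ≤ t →
          HasDerivWithinAt (fun τ : ℝ => Ut lam R τ N y x y' x')
            ((∑ j : Fin (N + 1), (lam (x j) : ℂ) *
                (Ut lam R t N y (Function.update x j (x j + 1)) y' x' -
                  Ut lam R t N y x y' x')) +
             (∑ i : Fin N, (lam (y i) : ℂ) *
                (Ut lam R t N (Function.update y i (y i + 1)) x y' x' -
                  Ut lam R t N y x y' x')))
            (Set.Ici 0) t) ∧
    (∀ (y : Fin N → ℕ) (x : Fin (N + 1) → ℕ) (i : Fin N) (hi : (i : ℕ) + 1 < N),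
        y i = y ⟨(i : ℕ) + 1, hi⟩ → ∀ t : ℝ, 0 ≤ t → Ut lam R t N y x y' x' = 0) := by
  refine ⟨fun y x h => Ut_zero hs hlb hub hR h hy'x',
    fun y x _ _ _ t _ => (hasDerivAt_Ut hs hlb hub hR t y x y' x').hasDerivWithinAt,
    fun y x i hi hy t _ => Ut_eq_zero_of_eq t x y' x' (fun hc => ?_) hy⟩
  simpa using congrArg Fin.val hc
end
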